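/- Let 0 < θ < 1, let p₀, p₁ be globally log-Hölder continuous exponents with 1 ≤ p₀⁻ ≤ p₀⁺ < ∞ and 1 ≤ p₁⁻ ≤ p₁⁺ < ∞, and let α₀, α₁ : ℝ^n → ℝ be locally log-Hölder continuous. Define 1/p(·) := (1−θ)/p₀(·) + θ/p₁(·) and α(·) := (1−θ)α₀(·) + θα₁(·). Then there exists a constant C > 0 such that for every complex sequence λ with 0 < ‖λ‖_{f^{α(·)}_{p(·),p(·)}} < ∞ there exist nonnegative sequences λ⁰, λ¹ indexed by ℕ₀ × ℤ^n with |λ_{j,m}| ≤ ‖λ‖_{f^{α(·)}_{p(·),p(·)}} (λ⁰_{j,m})^{1−θ} (λ¹_{j,m})^{θ} for all j ∈ ℕ₀ and m ∈ ℤ^n, and ‖λ⁰‖_{f^{α₀(·)}_{p₀(·),p₀(·)}} ≤ C and ‖λ¹‖_{f^{α₁(·)}_{p₁(·),p₁(·)}} ≤ C. -/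

import Mathlib

open MeasureTheory ENNReal Real Set

noncomputable section

/-- Euclidean space ℝ^n. -/
abbrev En (n : ℕ) := EuclideanSpace ℝ (Fin n)

/-- `g` is locally log-Hölder continuous with constant `c`. -/
def LocLogHolder {n : ℕ} (c : ℝ) (g : En n → ℝ) : Prop :=
  0 < c ∧ ∀ x y : En n, |g x - g y| ≤ c / Real.log (Real.exp 1 + 1 / ‖x - y‖)

/-- `g` is globally log-Hölder continuous with local constant `c`. -/
def GlobLogHolder {n : ℕ} (c : ℝ) (g : En n → ℝ) : Prop :=
  LocLogHolder c g ∧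
    ∃ (gi cd : ℝ), 0 < cd ∧ ∀ x : En n, |g x - gi| ≤ cd / Real.log (Real.exp 1 + ‖x‖)

/-- The kernel η_{v,h}(x) = 2^{nv} (1 + 2^v |x|)^{-h}. -/
def eta (n : ℕ) (v : ℕ) (h : ℝ) (x : En n) : ℝ :=
  (2 : ℝ) ^ (n * v) * (1 + (2 : ℝ) ^ v * ‖x‖) ^ (-h)

/-- The dyadic cube Q_{v,m}. -/
def dyadicCube (n : ℕ) (v : ℤ) (m : Fin n → ℤ) : Set (En n) :=
  {x | ∀ i, (m i : ℝ) ≤ (2 : ℝ) ^ v * x i ∧ (2 : ℝ) ^ v * x i < m i + 1}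

/-- Luxemburg (quasi-)norm of an ℝ≥0∞-valued function with variable exponent `p`. -/
def luxNorm {n : ℕ} (p : En n → ℝ) (F : En n → ℝ≥0∞) : ℝ≥0∞ :=
  sInf {c : ℝ≥0∞ | 0 < c ∧ ∫⁻ x, (F x / c) ^ p x ≤ 1}

/-- The mixed Lebesgue-sequence space norm ‖(F_v)_v‖_{L^{p(·)}(ℓ_{q(·)})}. -/
def mixedNorm {n : ℕ} (p q : En n → ℝ) (F : ℕ → En n → ℝ≥0∞) : ℝ≥0∞ :=
  luxNorm p fun x => (∑' v : ℕ, F v x ^ q x) ^ (1 / q x)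

/-- The sequence space norm ‖λ‖_{f^{α(·)}_{p(·),q(·)}}. -/
def seqNorm {n : ℕ} (α p q : En n → ℝ) (lam : ℕ → (Fin n → ℤ) → ℂ) : ℝ≥0∞ :=
  mixedNorm p q fun v x =>
    ∑' m : Fin n → ℤ,
      ENNReal.ofReal ((2 : ℝ) ^ ((v : ℝ) * (α x + n / 2)) * ‖lam v m‖) *
        (dyadicCube n (v : ℤ) m).indicator (fun _ => (1 : ℝ≥0∞)) x

/-- The sequence space norm ‖λ‖_{f^{α(·)}_{∞,q}}. -/
def seqNormInf {n : ℕ} (α : En n → ℝ) (q : ℝ) (lam : ℕ → (Fin n → ℤ) → ℂ) : ℝ≥0∞ :=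
  ⨆ (vQ : ℤ) (mQ : Fin n → ℤ),
    volume (dyadicCube n vQ mQ) ^ (-(1 / q)) *
      (∑' v : ℕ, if vQ ≤ (v : ℤ) then
          ∫⁻ x in dyadicCube n vQ mQ,
            ∑' m : Fin n → ℤ,
              ENNReal.ofReal ((2 : ℝ) ^ ((v : ℝ) * (α x + n / 2) * q) * ‖lam v m‖ ^ q) *
                (dyadicCube n (v : ℤ) m).indicator (fun _ => (1 : ℝ≥0∞)) x
        else 0) ^ (1 / q)

/-- The Calderón product (quasi-)norm associated to two sequence space norms. -/
def calderonNorm {n : ℕ} (N0 N1 : (ℕ → (Fin n → ℤ) → ℂ) → ℝ≥0∞) (θ : ℝ)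
    (lam : ℕ → (Fin n → ℤ) → ℂ) : ℝ≥0∞ :=
  sInf {M : ℝ≥0∞ | ∃ μ ν : ℕ → (Fin n → ℤ) → ℂ, N0 μ ≤ 1 ∧ N1 ν ≤ 1 ∧
    ∀ v m, ENNReal.ofReal ‖lam v m‖ ≤
      M * ENNReal.ofReal ‖μ v m‖ ^ (1 - θ) * ENNReal.ofReal ‖ν v m‖ ^ θ}


/-- index of the level-`v` dyadic cube containing `x` -/
def mmI {n : ℕ} (v : ℕ) (x : En n) : Fin n → ℤ := fun i => ⌊(2 : ℝ) ^ v * x i⌋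

/-- lower corner of a dyadic cube -/
def yQ {n : ℕ} (v : ℕ) (m : Fin n → ℤ) : En n := WithLp.toLp 2 (fun i => (m i : ℝ) / 2 ^ v)

lemma mem_cube_iff {n : ℕ} (v : ℕ) (m : Fin n → ℤ) (x : En n) :
    x ∈ dyadicCube n (v : ℤ) m ↔ m = mmI v x := by
  unfold dyadicCube mmI
  simp only [Set.mem_ofPred_eq, zpow_natCast, funext_iff]
  refine forall_congr' fun i => ?_
  rw [eq_comm, Int.floor_eq_iff]

lemma dist_yQ {n : ℕ} (v : ℕ) (x : En n) :
    ‖x - yQ v (mmI v x)‖ * 2 ^ v ≤ n := by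
  have h2 : (0 : ℝ) < 2 ^ v := by positivity
  rw [← le_div_iff₀ h2, EuclideanSpace.norm_eq]
  apply Real.sqrt_le_iff.2
  refine ⟨by positivity, ?_⟩
  calc ∑ i, ‖(x - yQ v (mmI v x)) i‖ ^ 2 ≤ ∑ i : Fin n, (1 / 2 ^ v : ℝ) ^ 2 := by
        refine Finset.sum_le_sum fun i _ => ?_
        have h1 := Int.floor_le ((2 : ℝ) ^ v * x i)
        have h3 := Int.lt_floor_add_one ((2 : ℝ) ^ v * x i)
        have e : (x - yQ v (mmI v x)) i = (2 ^ v * x i - ⌊(2 : ℝ) ^ v * x i⌋) / 2 ^ v := by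
          simp only [yQ, mmI, PiLp.sub_apply]
          field_simp
        rw [e]
        gcongr
        rw [Real.norm_eq_abs, abs_div, abs_of_pos h2]
        gcongr
        rw [abs_le]; constructor <;> linarith
    _ = n * (1 / 2 ^ v : ℝ) ^ 2 := by simp
    _ ≤ (n / 2 ^ v : ℝ) ^ 2 := by
        rw [div_pow, div_pow, one_pow, mul_one_div]
        gcongr
        have : n ≤ n ^ 2 := Nat.le_self_pow (by norm_num) n
        exact_mod_cast this

lemma vol_cube {n : ℕ} (v : ℕ) (m : Fin n → ℤ) :
    MeasurableSet (dyadicCube n (v : ℤ) m) ∧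
    volume (dyadicCube n (v : ℤ) m) = ENNReal.ofReal (1 / 2 ^ (v * n)) := by
  have h2 : (0 : ℝ) < 2 ^ v := by positivity
  have e : dyadicCube n (v : ℤ) m = (MeasurableEquiv.toLp 2 (Fin n → ℝ)).symm ⁻¹'
      (Set.pi Set.univ fun i => Set.Ico ((m i : ℝ) / 2 ^ v) ((m i + 1 : ℝ) / 2 ^ v)) := by
    ext x
    simp only [dyadicCube, Set.mem_ofPred_eq, zpow_natCast, Set.mem_preimage, Set.mem_pi,
      Set.mem_univ, true_implies, Set.mem_Ico]
    refine forall_congr' fun i => ?_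
    rw [div_le_iff₀ h2, lt_div_iff₀ h2, mul_comm]
    rfl
  have hm : MeasurableSet (Set.pi Set.univ fun i : Fin n =>
      Set.Ico ((m i : ℝ) / 2 ^ v) ((m i + 1 : ℝ) / 2 ^ v)) :=
    MeasurableSet.univ_pi fun i => measurableSet_Ico
  refine ⟨by rw [e]; exact (MeasurableEquiv.measurable _) hm, ?_⟩
  rw [e, (EuclideanSpace.volume_preserving_symm_measurableEquiv_toLp (Fin n)).measure_preimage
    hm.nullMeasurableSet, Real.volume_pi_Ico]
  rw [← ENNReal.ofReal_prod_of_nonneg]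
  · congr 1
    have : ∀ i : Fin n, ((m i + 1 : ℝ) / 2 ^ v - (m i : ℝ) / 2 ^ v) = 1 / 2 ^ v := by
      intro i; ring
    simp [this, pow_mul]
  · intro i _
    rw [← sub_div]; simp

lemma modular_eq {n : ℕ} (α p : En n → ℝ) (lam : ℕ → (Fin n → ℤ) → ℂ) (x : En n)
    (hp : 0 < p x) (d : ℝ) (hd : 0 < d) :
    ((∑' v : ℕ, (∑' m : Fin n → ℤ,
      ENNReal.ofReal ((2 : ℝ) ^ ((v : ℝ) * (α x + n / 2)) * ‖lam v m‖) *
        (dyadicCube n (v : ℤ) m).indicator (fun _ => (1 : ℝ≥0∞)) x) ^ p x) ^ (1 / p x)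
        / ENNReal.ofReal d) ^ p x =
    ∑' v : ℕ, ENNReal.ofReal
      (((2 : ℝ) ^ ((v : ℝ) * (α x + n / 2)) * ‖lam v (mmI v x)‖ / d) ^ p x) := by
  have h1 : ∀ v : ℕ, (∑' m : Fin n → ℤ,
      ENNReal.ofReal ((2 : ℝ) ^ ((v : ℝ) * (α x + n / 2)) * ‖lam v m‖) *
        (dyadicCube n (v : ℤ) m).indicator (fun _ => (1 : ℝ≥0∞)) x) =
      ENNReal.ofReal ((2 : ℝ) ^ ((v : ℝ) * (α x + n / 2)) * ‖lam v (mmI v x)‖) := by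
    intro v
    rw [tsum_eq_single (mmI v x)]
    · rw [Set.indicator_of_mem ((mem_cube_iff v _ x).2 rfl), mul_one]
    · intro m hm
      rw [Set.indicator_of_notMem (fun h => hm ((mem_cube_iff v _ x).1 h)), mul_zero]
  simp_rw [h1]
  rw [ENNReal.div_rpow_of_nonneg _ _ hp.le, ← ENNReal.rpow_mul, one_div_mul_cancel hp.ne',
    ENNReal.rpow_one, div_eq_mul_inv, ← ENNReal.tsum_mul_right]
  refine tsum_congr fun v => ?_
  rw [← div_eq_mul_inv, ← ENNReal.div_rpow_of_nonneg _ _ hp.le,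
    ← ENNReal.ofReal_div_of_pos hd, ENNReal.ofReal_rpow_of_nonneg (by positivity) hp.le]

lemma logH {n : ℕ} {g : En n → ℝ} (hg : ∃ c, LocLogHolder c g) :
    ∃ B : ℝ, 0 ≤ B ∧ ∀ (v : ℕ) (x : En n), v * |g x - g (yQ v (mmI v x))| ≤ B := by
  obtain ⟨c, hc, h⟩ := hg
  set R : ℝ := 1 + n
  have hR : 1 ≤ R := by simp [R]
  have hlR : 0 ≤ Real.log R := Real.log_nonneg hR
  have hl2 : 0 < Real.log 2 := Real.log_pos (by norm_num)
  refine ⟨c * (1 + Real.log R) / Real.log 2, by positivity, fun v x => ?_⟩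
  set y := yQ v (mmI v x)
  by_cases hxy : x = y
  · rw [← hxy]; simp; positivity
  have hd : 0 < ‖x - y‖ := norm_pos_iff.2 (sub_ne_zero.2 hxy)
  have h1 := h x y
  have h3 : ‖x - y‖ * 2 ^ v ≤ n := dist_yQ v x
  have he : 0 < Real.exp 1 := Real.exp_pos 1
  have h4 : (2 : ℝ) ^ v ≤ R * (Real.exp 1 + 1 / ‖x - y‖) := by
    have : (2 : ℝ) ^ v ≤ n * (1 / ‖x - y‖) := by
      rw [mul_one_div, le_div_iff₀ hd]; linarith
    have h5 : 0 < 1 / ‖x - y‖ := by positivity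
    have hn : (0 : ℝ) ≤ n := by positivity
    simp only [R]; nlinarith
  set E := Real.exp 1 + 1 / ‖x - y‖
  have hE : 1 ≤ Real.log E := by
    rw [Real.le_log_iff_exp_le (by positivity)]
    simp only [E]
    have : 0 < 1 / ‖x - y‖ := by positivity
    linarith
  have h5 : v * Real.log 2 ≤ Real.log R + Real.log E := by
    rw [← Real.log_pow, ← Real.log_mul (by positivity) (by positivity)]
    exact Real.log_le_log (by positivity) h4
  rw [le_div_iff₀ (by linarith)] at h1
  rw [le_div_iff₀ hl2]
  have ha := abs_nonneg (g x - g y)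
  calc v * |g x - g y| * Real.log 2 = |g x - g y| * (v * Real.log 2) := by ring
    _ ≤ |g x - g y| * ((1 + Real.log R) * Real.log E) :=
        mul_le_mul_of_nonneg_left (by nlinarith) ha
    _ = |g x - g y| * Real.log E * (1 + Real.log R) := by ring
    _ ≤ c * (1 + Real.log R) := by gcongr

lemma norm_cmp {n : ℕ} (v : ℕ) (x : En n) :
    ‖x - yQ v (mmI v x)‖ ≤ n := by
  have h := dist_yQ v x
  have : (1 : ℝ) ≤ 2 ^ v := one_le_pow₀ (by norm_num)
  nlinarith [norm_nonneg (x - yQ v (mmI v x))]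

lemma logH' {n : ℕ} {g : En n → ℝ} (hg : ∃ c, GlobLogHolder c g) :
    ∃ B : ℝ, 0 ≤ B ∧ ∀ (v : ℕ) (x : En n),
      (v + Real.log (Real.exp 1 + ‖yQ v (mmI v x)‖)) * |g x - g (yQ v (mmI v x))| ≤ B := by
  obtain ⟨c, hl, gi, cd, hcd, h⟩ := hg
  obtain ⟨B, hB, hB'⟩ := logH ⟨c, hl⟩
  set R : ℝ := 1 + n
  have hR : 1 ≤ R := by simp [R]
  have hlR : 0 ≤ Real.log R := Real.log_nonneg hR
  refine ⟨B + (cd * (1 + Real.log R) + cd), by positivity, fun v x => ?_⟩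
  rw [add_mul]
  refine add_le_add (hB' v x) ?_
  have hnx : ‖x - yQ v (mmI v x)‖ ≤ n := norm_cmp v x
  set y := yQ v (mmI v x)
  have he : 1 < Real.exp 1 := by simp
  have hlog : ∀ z : En n, 1 ≤ Real.log (Real.exp 1 + ‖z‖) := by
    intro z
    rw [Real.le_log_iff_exp_le (by positivity)]
    linarith [norm_nonneg z]
  have h1 := h x
  have h2 := h y
  rw [le_div_iff₀ (by linarith [hlog x])] at h1
  rw [le_div_iff₀ (by linarith [hlog y])] at h2
  have h3 : Real.exp 1 + ‖y‖ ≤ R * (Real.exp 1 + ‖x‖) := by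
    have : ‖y‖ ≤ ‖x‖ + ‖x - y‖ := by
      have := norm_sub_le x (x - y); simpa using this
    have hn : (0 : ℝ) ≤ n := by positivity
    simp only [R]; nlinarith [norm_nonneg x]
  have h4 : Real.log (Real.exp 1 + ‖y‖) ≤ (1 + Real.log R) * Real.log (Real.exp 1 + ‖x‖) := by
    have : Real.log (Real.exp 1 + ‖y‖) ≤ Real.log R + Real.log (Real.exp 1 + ‖x‖) := by
      rw [← Real.log_mul (by positivity) (by positivity)]
      exact Real.log_le_log (by positivity) h3
    nlinarith [hlog x]
  have h5 : |g x - g y| ≤ |g x - gi| + |g y - gi| := by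
    have := abs_sub (g x - gi) (g y - gi)
    simpa using this
  have hy := hlog y
  calc Real.log (Real.exp 1 + ‖y‖) * |g x - g y|
      ≤ Real.log (Real.exp 1 + ‖y‖) * (|g x - gi| + |g y - gi|) := by gcongr
    _ = Real.log (Real.exp 1 + ‖y‖) * |g x - gi| + |g y - gi| * Real.log (Real.exp 1 + ‖y‖) := by
        ring
    _ ≤ ((1 + Real.log R) * Real.log (Real.exp 1 + ‖x‖)) * |g x - gi| + cd := by gcongr
    _ = (|g x - gi| * Real.log (Real.exp 1 + ‖x‖)) * (1 + Real.log R) + cd := by ring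
    _ ≤ cd * (1 + Real.log R) + cd := by gcongr

lemma exp_diff {b θ P0 P1 Q0 Q1 p q : ℝ} (hθ0 : 0 ≤ θ) (hθ1 : θ ≤ 1)
    (hP0 : 1 ≤ P0 ∧ P0 ≤ b) (hP1 : 1 ≤ P1 ∧ P1 ≤ b) (hQ0 : 1 ≤ Q0 ∧ Q0 ≤ b)
    (hQ1 : 1 ≤ Q1 ∧ Q1 ≤ b)
    (hp : 1 / p = (1 - θ) / P0 + θ / P1) (hq : 1 / q = (1 - θ) / Q0 + θ / Q1) :
    |q / Q0 * P0 - p| ≤ b ^ 2 * (|P0 - Q0| + |P1 - Q1|) := by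
  obtain ⟨hP0, hP0'⟩ := hP0
  obtain ⟨hP1, hP1'⟩ := hP1
  obtain ⟨hQ0, hQ0'⟩ := hQ0
  obtain ⟨hQ1, hQ1'⟩ := hQ1
  have hD : 1 ≤ (1 - θ) * P1 + θ * P0 := by nlinarith
  have hD' : 1 ≤ (1 - θ) * Q1 + θ * Q0 := by nlinarith
  have e1 : p = P0 * P1 / ((1 - θ) * P1 + θ * P0) := by
    have : 1 / p = ((1 - θ) * P1 + θ * P0) / (P0 * P1) := by
      rw [hp]; field_simp
    rw [← one_div_div, ← this, one_div_one_div]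
  have e2 : q = Q0 * Q1 / ((1 - θ) * Q1 + θ * Q0) := by
    have : 1 / q = ((1 - θ) * Q1 + θ * Q0) / (Q0 * Q1) := by
      rw [hq]; field_simp
    rw [← one_div_div, ← this, one_div_one_div]
  set D := (1 - θ) * P1 + θ * P0 with hDd
  set D' := (1 - θ) * Q1 + θ * Q0 with hDd'
  have e3 : q / Q0 * P0 - p = (P0 * θ * (Q1 * (P0 - Q0) - Q0 * (P1 - Q1))) / (D * D') := by
    have : P0 * θ * (Q1 * (P0 - Q0) - Q0 * (P1 - Q1)) = P0 * (Q1 * D - P1 * D') := by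
      rw [hDd, hDd']; ring
    rw [this, e1, e2]
    field_simp
  have hDD : 1 ≤ D * D' := by nlinarith
  rw [e3, abs_div, abs_of_pos (by linarith : 0 < D * D')]
  refine (div_le_self (abs_nonneg _) hDD).trans ?_
  rw [abs_mul, abs_of_nonneg (by positivity : 0 ≤ P0 * θ)]
  have h1 : |Q1 * (P0 - Q0) - Q0 * (P1 - Q1)| ≤ b * (|P0 - Q0| + |P1 - Q1|) := by
    refine (abs_sub _ _).trans ?_
    rw [abs_mul, abs_mul, abs_of_nonneg (by linarith : 0 ≤ Q1), abs_of_nonneg (by linarith : 0 ≤ Q0),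
      mul_add]
    gcongr
  calc P0 * θ * |Q1 * (P0 - Q0) - Q0 * (P1 - Q1)|
      ≤ (b * 1) * (b * (|P0 - Q0| + |P1 - Q1|)) := by
        have : 0 ≤ b := by linarith
        gcongr
    _ = _ := by ring

lemma core1 {v n : ℕ} {A A' B b M T r P p : ℝ} (hA : v * |A - A'| ≤ B) (hP : 0 ≤ P)
    (hPb : P ≤ b) (hB : 0 ≤ B) (hM : |T| * |r * P - p| ≤ M) :
    ((2 : ℝ) ^ ((v : ℝ) * (A + n / 2)) *
      Real.exp (Real.log 2 - v * (A' + n / 2) * Real.log 2 + T * r)) ^ P ≤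
    Real.exp (b * (Real.log 2 + B * Real.log 2) + M) * Real.exp T ^ p := by
  have hl2 : 0 < Real.log 2 := Real.log_pos (by norm_num)
  rw [Real.rpow_def_of_pos (by norm_num : (0 : ℝ) < 2), ← Real.exp_add, ← Real.exp_mul,
    ← Real.exp_mul, ← Real.exp_add, Real.exp_le_exp]
  have h1 : v * (A - A') ≤ B := le_trans (by gcongr; exact le_abs_self _) hA
  have h2 : T * (r * P - p) ≤ M := (le_abs_self _).trans (by rw [abs_mul]; exact hM)
  have h3 : P * (Real.log 2 + v * (A - A') * Real.log 2) ≤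
      b * (Real.log 2 + B * Real.log 2) := by
    calc P * (Real.log 2 + v * (A - A') * Real.log 2) 
        ≤ P * (Real.log 2 + B * Real.log 2) := by gcongr
      _ ≤ _ := by gcongr
  linarith

lemma core2 {v n : ℕ} {A A' B b a p : ℝ} (hA : v * |A - A'| ≤ B) (hp : 0 ≤ p)
    (hpb : p ≤ b) (hB : 0 ≤ B) (ha : 0 ≤ a) :
    ((2 : ℝ) ^ ((v : ℝ) * (A' + n / 2)) * a) ^ p ≤
    Real.exp (b * (B * Real.log 2)) * ((2 : ℝ) ^ ((v : ℝ) * (A + n / 2)) * a) ^ p := by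
  have hl2 : 0 < Real.log 2 := Real.log_pos (by norm_num)
  have h1 : v * (A' - A) ≤ B :=
    le_trans (by gcongr; rw [abs_sub_comm]; exact le_abs_self _) hA
  have h2 : (2 : ℝ) ^ ((v : ℝ) * (A' + n / 2)) ≤
      Real.exp (B * Real.log 2) * (2 : ℝ) ^ ((v : ℝ) * (A + n / 2)) := by
    rw [Real.rpow_def_of_pos (by norm_num : (0 : ℝ) < 2),
      Real.rpow_def_of_pos (by norm_num : (0 : ℝ) < 2), ← Real.exp_add, Real.exp_le_exp]
    nlinarith
  calc ((2 : ℝ) ^ ((v : ℝ) * (A' + n / 2)) * a) ^ p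
      ≤ (Real.exp (B * Real.log 2) * ((2 : ℝ) ^ ((v : ℝ) * (A + n / 2)) * a)) ^ p := by
        rw [← mul_assoc]; gcongr
    _ = Real.exp (p * (B * Real.log 2)) * ((2 : ℝ) ^ ((v : ℝ) * (A + n / 2)) * a) ^ p := by
        rw [Real.mul_rpow (by positivity) (by positivity), ← Real.exp_mul, mul_comm p]
    _ ≤ _ := by gcongr

lemma seqNorm_le {n : ℕ} (α p : En n → ℝ) (lam : ℕ → (Fin n → ℤ) → ℂ) (hp : ∀ x, 1 ≤ p x)
    (K : ℝ) (hK : 1 ≤ K)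
    (h : ∫⁻ x, ∑' v : ℕ, ENNReal.ofReal
      (((2 : ℝ) ^ ((v : ℝ) * (α x + n / 2)) * ‖lam v (mmI v x)‖) ^ p x) ≤ ENNReal.ofReal K) :
    seqNorm α p p lam ≤ ENNReal.ofReal K := by
  have hK0 : 0 < K := by linarith
  unfold seqNorm mixedNorm luxNorm
  refine sInf_le ⟨by simpa using hK0, ?_⟩
  have e : ∀ x, _ := fun x => modular_eq α p lam x (by linarith [hp x]) K hK0
  simp_rw [e]
  calc _ ≤ ∫⁻ x, ENNReal.ofReal K⁻¹ * ∑' v : ℕ, ENNReal.ofReal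
            (((2 : ℝ) ^ ((v : ℝ) * (α x + n / 2)) * ‖lam v (mmI v x)‖) ^ p x) := by
        refine lintegral_mono fun x => ?_
        rw [← ENNReal.tsum_mul_left]
        refine ENNReal.tsum_le_tsum fun v => ?_
        rw [← ENNReal.ofReal_mul (by positivity)]
        apply ENNReal.ofReal_le_ofReal
        rw [Real.div_rpow (by positivity) (by positivity), div_eq_inv_mul]
        gcongr
        calc K = K ^ (1 : ℝ) := by simp
          _ ≤ K ^ p x := Real.rpow_le_rpow_of_exponent_le hK (hp x)
    _ ≤ ENNReal.ofReal K⁻¹ * ENNReal.ofReal K := by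
        rw [lintegral_const_mul' _ _ ENNReal.ofReal_ne_top]
        gcongr
    _ = 1 := by
        rw [← ENNReal.ofReal_mul (by positivity), inv_mul_cancel₀ hK0.ne', ENNReal.ofReal_one]

/-- the tail integral -/
def tailI (n : ℕ) : ℝ :=
  (∫⁻ x : En n, ENNReal.ofReal ((1 + ‖x‖) ^ (-((n : ℝ) + 1)))).toReal

lemma int_bound {n : ℕ} (K : ℝ) (hK : 0 ≤ K) (W A : ℕ → En n → ℝ) (hA : ∀ v x, 0 ≤ A v x)
    (hW : ∀ v x, W v x ≤ K * (A v x + (1 / 2) ^ v * (1 + ‖x‖) ^ (-((n : ℝ) + 1))))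
    (hI : ∫⁻ x, ∑' v, ENNReal.ofReal (A v x) ≤ 1) :
    ∫⁻ x, ∑' v, ENNReal.ofReal (W v x) ≤ ENNReal.ofReal (K * (1 + 2 * tailI n)) := by
  have hfin : ∫⁻ x : En n, ENNReal.ofReal ((1 + ‖x‖) ^ (-((n : ℝ) + 1))) ≠ ∞ := by
    apply ne_of_lt
    apply finite_integral_one_add_norm
    simp
  have hgeo : ∑' v : ℕ, ENNReal.ofReal ((1 / 2 : ℝ) ^ v) = 2 := by
    rw [← ENNReal.ofReal_tsum_of_nonneg (fun v => by positivity) summable_geometric_two,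
      tsum_geometric_two]
    simp
  calc ∫⁻ x, ∑' v, ENNReal.ofReal (W v x)
      ≤ ∫⁻ x, ENNReal.ofReal K * (∑' v, ENNReal.ofReal (A v x) +
          2 * ENNReal.ofReal ((1 + ‖x‖) ^ (-((n : ℝ) + 1)))) := by
        refine lintegral_mono fun x => ?_
        have e2 : 2 * ENNReal.ofReal ((1 + ‖x‖) ^ (-((n : ℝ) + 1))) =
            ∑' v : ℕ, ENNReal.ofReal ((1 / 2 : ℝ) ^ v) *
              ENNReal.ofReal ((1 + ‖x‖) ^ (-((n : ℝ) + 1))) := by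
          rw [ENNReal.tsum_mul_right, hgeo]
        rw [e2, ← ENNReal.tsum_add, ← ENNReal.tsum_mul_left]
        refine ENNReal.tsum_le_tsum fun v => ?_
        rw [← ENNReal.ofReal_mul (by positivity), ← ENNReal.ofReal_add (hA v x) (by positivity),
          ← ENNReal.ofReal_mul hK]
        exact ENNReal.ofReal_le_ofReal (hW v x)
    _ = ENNReal.ofReal K * ((∫⁻ x, ∑' v, ENNReal.ofReal (A v x)) +
          2 * ∫⁻ x : En n, ENNReal.ofReal ((1 + ‖x‖) ^ (-((n : ℝ) + 1)))) := by
        rw [lintegral_const_mul' _ _ ENNReal.ofReal_ne_top, lintegral_add_right,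
          lintegral_const_mul' _ _ (by norm_num)]
        fun_prop
    _ ≤ ENNReal.ofReal K * (1 + 2 * ENNReal.ofReal (tailI n)) := by
        rw [tailI, ENNReal.ofReal_toReal hfin]
        gcongr
    _ = _ := by
        have : 0 ≤ tailI n := ENNReal.toReal_nonneg
        rw [ENNReal.ofReal_mul hK, ENNReal.ofReal_add (by norm_num) (by positivity),
          ENNReal.ofReal_mul (by norm_num)]
        simp

lemma tbound {n : ℕ} (α p : En n → ℝ) (lam : ℕ → (Fin n → ℤ) → ℂ) (hp : ∀ x, 1 ≤ p x)
    {B d : ℝ} (hB : 0 ≤ B) (hd : 0 < d)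
    (hα : ∀ (v : ℕ) (x : En n), v * |α x - α (yQ v (mmI v x))| ≤ B)
    (h : ∫⁻ x, ∑' v : ℕ, ENNReal.ofReal
      (((2 : ℝ) ^ ((v : ℝ) * (α x + n / 2)) * ‖lam v (mmI v x)‖ / d) ^ p x) ≤ 1)
    (v : ℕ) (m : Fin n → ℤ) :
    (2 : ℝ) ^ ((v : ℝ) * (α (yQ v m) + n / 2)) * (‖lam v m‖ / d) ≤
      Real.exp (B * Real.log 2) * 2 ^ (v * n) := by
  have hl2 : 0 < Real.log 2 := Real.log_pos (by norm_num)
  set t := (2 : ℝ) ^ ((v : ℝ) * (α (yQ v m) + n / 2)) * (‖lam v m‖ / d) with ht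
  set K := Real.exp (B * Real.log 2) with hK
  have hK0 : 0 < K := Real.exp_pos _
  have h1 : (1 : ℝ) ≤ 2 ^ (v * n) := one_le_pow₀ (by norm_num)
  by_cases htK : t ≤ K
  · nlinarith
  push Not at htK
  obtain ⟨hm, hv⟩ := vol_cube v m
  have h2 : ENNReal.ofReal (t / K) * volume (dyadicCube n (v : ℤ) m) ≤ 1 := by
    rw [← setLIntegral_const, ← lintegral_indicator hm]
    refine le_trans (lintegral_mono fun x => ?_) h
    by_cases hx : x ∈ dyadicCube n (v : ℤ) m
    · rw [Set.indicator_of_mem hx]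
      have hmx := (mem_cube_iff v m x).1 hx
      refine le_trans ?_ (ENNReal.le_tsum v)
      apply ENNReal.ofReal_le_ofReal
      rw [← hmx]
      have hx' := hα v x
      rw [← hmx] at hx'
      have h3 := core2 (v := v) (n := n) (b := 1) (p := 1) (a := ‖lam v m‖ / d) hx'
        (by norm_num) le_rfl hB (by positivity)
      rw [Real.rpow_one, Real.rpow_one, one_mul] at h3
      have h4 : t / K ≤ (2 : ℝ) ^ ((v : ℝ) * (α x + n / 2)) * ‖lam v m‖ / d := by
        rw [div_le_iff₀ hK0, mul_comm, mul_div_assoc]; exact h3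
      have h5 : 1 ≤ t / K := by rw [le_div_iff₀ hK0]; linarith
      refine h4.trans ?_
      exact Real.self_le_rpow_of_one_le (h5.trans h4) (hp x)
    · rw [Set.indicator_of_notMem hx]; exact zero_le
  rw [hv, ← ENNReal.ofReal_mul (by positivity), ← ENNReal.ofReal_one,
    ENNReal.ofReal_le_ofReal_iff (by norm_num)] at h2
  rw [div_mul_div_comm, mul_one, div_le_one (by positivity)] at h2
  exact h2

lemma p_bd {b θ P0 P1 p : ℝ} (hθ0 : 0 < θ) (hθ1 : θ < 1)
    (hP0 : 1 ≤ P0 ∧ P0 ≤ b) (hP1 : 1 ≤ P1 ∧ P1 ≤ b)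
    (hp : 1 / p = (1 - θ) / P0 + θ / P1) : 1 ≤ p ∧ p ≤ b := by
  obtain ⟨hP0, hP0'⟩ := hP0
  obtain ⟨hP1, hP1'⟩ := hP1
  have h1 : (1 - θ) / P0 ≤ 1 - θ := div_le_self (by linarith) hP0
  have h2 : θ / P1 ≤ θ := div_le_self (by linarith) hP1
  have h3 : (1 - θ) / b ≤ (1 - θ) / P0 := by
    have : 0 ≤ 1 - θ := by linarith
    gcongr
  have h4 : θ / b ≤ θ / P1 := by gcongr
  have h5 : (1 - θ) / b + θ / b = 1 / b := by ring
  have hb : 0 < b := by linarith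
  have h6 : 1 / b ≤ 1 / p := by linarith
  have h7 : 0 < 1 / b := by positivity
  have h8 : 0 < p := by
    have : 0 < 1 / p := by linarith
    exact one_div_pos.1 this
  constructor
  · have : 1 / p ≤ 1 := by linarith
    rwa [div_le_one h8] at this
  · exact (one_div_le_one_div hb h8).1 h6

/-- the factor sequences -/
def facSeq {n : ℕ} (p₀ α₀ p : En n → ℝ) (T : ℕ → (Fin n → ℤ) → ℝ) (v : ℕ) (m : Fin n → ℤ) : ℝ :=
  Real.exp (Real.log 2 - v * (α₀ (yQ v m) + n / 2) * Real.log 2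
    + T v m * (p (yQ v m) / p₀ (yQ v m)))

lemma facSeq_pos {n : ℕ} (p₀ α₀ p : En n → ℝ) (T : ℕ → (Fin n → ℤ) → ℝ) (v : ℕ)
    (m : Fin n → ℤ) : 0 < facSeq p₀ α₀ p T v m := Real.exp_pos _

lemma fac_prod {n : ℕ} {θ : ℝ} (p₀ p₁ p α₀ α₁ α : En n → ℝ) (hp0 : ∀ x, p x ≠ 0)
    (hp : ∀ x, 1 / p x = (1 - θ) / p₀ x + θ / p₁ x)
    (hα : ∀ x, α x = (1 - θ) * α₀ x + θ * α₁ x)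
    (T : ℕ → (Fin n → ℤ) → ℝ) (v : ℕ) (m : Fin n → ℤ) :
    facSeq p₀ α₀ p T v m ^ (1 - θ) * facSeq p₁ α₁ p T v m ^ θ =
      2 * (Real.exp (T v m) / (2 : ℝ) ^ ((v : ℝ) * (α (yQ v m) + n / 2))) := by
  unfold facSeq
  set y := yQ v m
  rw [← Real.exp_mul, ← Real.exp_mul, ← Real.exp_add,
    Real.rpow_def_of_pos (by norm_num : (0 : ℝ) < 2), ← Real.exp_sub]
  have e2 : ∀ z : ℝ, 2 * Real.exp z = Real.exp (Real.log 2 + z) := by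
    intro z; rw [Real.exp_add, Real.exp_log (by norm_num)]
  rw [e2, hα y]
  congr 1
  have h1 : p y / p₀ y * (1 - θ) + p y / p₁ y * θ = 1 := by
    calc _ = p y * ((1 - θ) / p₀ y + θ / p₁ y) := by ring
      _ = 1 := by rw [← hp y, mul_one_div_cancel (hp0 y)]
  linear_combination T v m * h1

/-- the endpoint constant -/
def endC (n : ℕ) (b B0 N Bp0 Bp1 K : ℝ) : ℝ :=
  Real.exp (b * (Real.log 2 + B0 * Real.log 2) + N * (b ^ 2 * (Bp0 + Bp1))) * K *
    (1 + 2 * tailI n)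

lemma endpoint {n : ℕ} {θ : ℝ} (hθ0 : 0 < θ) (hθ1 : θ < 1) (p₀ p₁ p α₀ : En n → ℝ)
    {b B0 N Bp0 Bp1 K : ℝ} (hb0 : ∀ x, 1 ≤ p₀ x ∧ p₀ x ≤ b) (hb1 : ∀ x, 1 ≤ p₁ x ∧ p₁ x ≤ b)
    (hp : ∀ x, 1 / p x = (1 - θ) / p₀ x + θ / p₁ x)
    (hB0 : 0 ≤ B0) (hN : 0 ≤ N) (hBp0 : 0 ≤ Bp0) (hBp1 : 0 ≤ Bp1) (hK : 1 ≤ K)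
    (hα : ∀ (v : ℕ) (x : En n), v * |α₀ x - α₀ (yQ v (mmI v x))| ≤ B0)
    (hp0 : ∀ (v : ℕ) (x : En n),
      (v + Real.log (Real.exp 1 + ‖yQ v (mmI v x)‖)) * |p₀ x - p₀ (yQ v (mmI v x))| ≤ Bp0)
    (hp1 : ∀ (v : ℕ) (x : En n),
      (v + Real.log (Real.exp 1 + ‖yQ v (mmI v x)‖)) * |p₁ x - p₁ (yQ v (mmI v x))| ≤ Bp1)
    (T : ℕ → (Fin n → ℤ) → ℝ) (A : ℕ → En n → ℝ)
    (hTN : ∀ v m, |T v m| ≤ N * (v + Real.log (Real.exp 1 + ‖yQ v m‖)))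
    (hA : ∀ v x, 0 ≤ A v x)
    (hT : ∀ v x, Real.exp (T v (mmI v x)) ^ p x ≤
      K * (A v x + (1 / 2) ^ v * (1 + ‖x‖) ^ (-((n : ℝ) + 1))))
    (hI : ∫⁻ x, ∑' v, ENNReal.ofReal (A v x) ≤ 1) :
    seqNorm α₀ p₀ p₀ (fun j m => ((facSeq p₀ α₀ p T j m : ℝ) : ℂ)) ≤
      ENNReal.ofReal (endC n b B0 N Bp0 Bp1 K) := by
  have hl2 : 0 < Real.log 2 := Real.log_pos (by norm_num)
  have hb : 1 ≤ b := (hb0 0).1.trans (hb0 0).2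
  have ht0 : 0 ≤ tailI n := ENNReal.toReal_nonneg
  apply seqNorm_le _ _ _ (fun x => (hb0 x).1)
  · unfold endC
    have h1 : 1 ≤ Real.exp (b * (Real.log 2 + B0 * Real.log 2) + N * (b ^ 2 * (Bp0 + Bp1))) :=
      Real.one_le_exp (by positivity)
    exact one_le_mul_of_one_le_of_one_le (one_le_mul_of_one_le_of_one_le h1 hK) (by linarith)
  · apply int_bound _ (by positivity) _ A hA _ hI
    intro v x
    have hM : |T v (mmI v x)| * |p (yQ v (mmI v x)) / p₀ (yQ v (mmI v x)) * p₀ x - p x| ≤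
        N * (b ^ 2 * (Bp0 + Bp1)) := by
      have h1 := exp_diff hθ0.le hθ1.le (hb0 x) (hb1 x) (hb0 (yQ v (mmI v x)))
        (hb1 (yQ v (mmI v x))) (hp x) (hp _)
      have h2 := hTN v (mmI v x)
      have h3 := hp0 v x
      have h4 := hp1 v x
      set y := yQ v (mmI v x)
      set L := v + Real.log (Real.exp 1 + ‖y‖)
      calc _ ≤ (N * L) * (b ^ 2 * (|p₀ x - p₀ y| + |p₁ x - p₁ y|)) := by
            apply mul_le_mul h2 h1 (abs_nonneg _) ((abs_nonneg _).trans h2)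
        _ = N * (b ^ 2 * (L * |p₀ x - p₀ y| + L * |p₁ x - p₁ y|)) := by ring
        _ ≤ _ := by gcongr
    have h5 := core1 (n := n) (hα v x) (by linarith [hb0 x] : 0 ≤ p₀ x) (hb0 x).2 hB0 hM
    have h6 : ‖((facSeq p₀ α₀ p T v (mmI v x) : ℝ) : ℂ)‖ = facSeq p₀ α₀ p T v (mmI v x) := by
      rw [Complex.norm_real, Real.norm_eq_abs, abs_of_pos (facSeq_pos ..)]
    rw [h6]
    refine h5.trans ?_
    rw [mul_assoc _ K]
    exact mul_le_mul_of_nonneg_left (hT v x) (Real.exp_pos _).le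

lemma log_bound {n v : ℕ} {t B Y : ℝ} (hB : 0 ≤ B) (hY : 1 ≤ Real.log Y) (hY0 : 0 < Y)
    (ht : t ≤ Real.exp (B * Real.log 2) * 2 ^ (v * n)) :
    |Real.log (max t ((1 / 2) ^ v * Y ^ (-((n : ℝ) + 1))))| ≤ (n + 1 + B) * (v + Real.log Y) := by
  have hl2 : 0 < Real.log 2 := Real.log_pos (by norm_num)
  have hl2' : Real.log 2 ≤ 1 := by linarith [Real.log_two_lt_d9]
  have he : 0 < (1 / 2 : ℝ) ^ v * Y ^ (-((n : ℝ) + 1)) := by positivity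
  have hn : (0 : ℝ) ≤ n := by positivity
  have hv : (0 : ℝ) ≤ v := by positivity
  have hle : Real.log ((1 / 2 : ℝ) ^ v * Y ^ (-((n : ℝ) + 1))) =
      - (v * Real.log 2 + (n + 1) * Real.log Y) := by
    rw [Real.log_mul (by positivity) (by positivity), Real.log_pow, Real.log_rpow hY0,
      one_div, Real.log_inv]
    ring
  have hvl : v * Real.log 2 ≤ v := mul_le_of_le_one_right hv hl2'
  have hBl : B * Real.log 2 ≤ B := mul_le_of_le_one_right hB hl2'
  have hBY : B ≤ B * Real.log Y := le_mul_of_one_le_right hB hY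
  have hK : Real.log (Real.exp (B * Real.log 2) * 2 ^ (v * n)) =
      B * Real.log 2 + n * (v * Real.log 2) := by
    rw [Real.log_mul (by positivity) (by positivity), Real.log_exp, Real.log_pow]
    push_cast; ring
  rw [abs_le]
  constructor
  · have h1 := Real.log_le_log he (le_max_right t _)
    rw [hle] at h1
    refine le_trans ?_ h1
    have : 0 ≤ (n : ℝ) * v := by positivity
    have : 0 ≤ B * v := by positivity
    have : 0 ≤ B * Real.log Y := by linarith
    nlinarith
  · have h2 : max t ((1 / 2) ^ v * Y ^ (-((n : ℝ) + 1))) ≤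
        Real.exp (B * Real.log 2) * 2 ^ (v * n) := by
      refine max_le ht ?_
      rw [← Real.log_le_log_iff he (by positivity), hle, hK]
      have : 0 ≤ v * Real.log 2 := by positivity
      have : 0 ≤ (n : ℝ) * (v * Real.log 2) := by positivity
      have : 0 ≤ (n + 1) * Real.log Y := by positivity
      have : 0 ≤ B * Real.log 2 := by positivity
      linarith
    have h1 := Real.log_le_log (lt_of_lt_of_le he (le_max_right t _)) h2
    rw [hK] at h1
    refine h1.trans ?_
    have : 0 ≤ (n : ℝ) * Real.log Y := by positivity
    have : 0 ≤ B * v := by positivity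
    nlinarith [mul_le_mul_of_nonneg_left hvl hn]

lemma tail_bound {n : ℕ} (v : ℕ) (x : En n) {p : ℝ} (hp : 1 ≤ p) :
    ((1 / 2 : ℝ) ^ v * (Real.exp 1 + ‖yQ v (mmI v x)‖) ^ (-((n : ℝ) + 1))) ^ p ≤
      (1 + n : ℝ) ^ ((n : ℝ) + 1) * ((1 / 2) ^ v * (1 + ‖x‖) ^ (-((n : ℝ) + 1))) := by
  have hnx := norm_cmp v x
  set y := yQ v (mmI v x)
  have he : 1 < Real.exp 1 := by simp
  have hy := norm_nonneg y
  have h1 : (1 / 2 : ℝ) ^ v ≤ 1 := pow_le_one₀ (by norm_num) (by norm_num)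
  have h2 : (Real.exp 1 + ‖y‖) ^ (-((n : ℝ) + 1)) ≤ 1 := by
    apply Real.rpow_le_one_of_one_le_of_nonpos
    · linarith
    · have : (0 : ℝ) ≤ n := by positivity
      linarith
  have h3 : (1 / 2 : ℝ) ^ v * (Real.exp 1 + ‖y‖) ^ (-((n : ℝ) + 1)) ≤ 1 :=
    mul_le_one₀ h1 (by positivity) h2
  have h4 := Real.rpow_le_rpow_of_exponent_ge (by positivity) h3 hp
  rw [Real.rpow_one] at h4
  refine h4.trans ?_
  rw [mul_left_comm]
  gcongr
  have h5 : 1 + ‖x‖ ≤ (1 + n) * (Real.exp 1 + ‖y‖) := by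
    have : ‖x‖ ≤ ‖x - y‖ + ‖y‖ := by simpa using norm_add_le (x - y) y
    have hn : (0 : ℝ) ≤ n := by positivity
    nlinarith
  rw [Real.rpow_neg (by positivity), Real.rpow_neg (by positivity), ← div_eq_mul_inv,
    le_div_iff₀ (by positivity), inv_mul_le_iff₀ (by positivity), mul_comm,
    ← Real.mul_rpow (by positivity) (by positivity)]
  exact Real.rpow_le_rpow (by positivity) h5 (by positivity)

/-- Step 2 of Theorem `calderon-prod1`: factorization of an arbitrary
element of `f^{α(·)}_{p(·),p(·)}` through the two endpoint sequence spaces. -/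
theorem stmt10 {n : ℕ} (θ : ℝ) (hθ : θ ∈ Set.Ioo (0 : ℝ) 1)
    (p₀ p₁ α₀ α₁ p α : En n → ℝ)
    (hp₀ : ∃ c, GlobLogHolder c p₀) (hp₁ : ∃ c, GlobLogHolder c p₁)
    (hp₀b : ∃ b : ℝ, ∀ x, 1 ≤ p₀ x ∧ p₀ x ≤ b)
    (hp₁b : ∃ b : ℝ, ∀ x, 1 ≤ p₁ x ∧ p₁ x ≤ b)
    (hα₀ : ∃ c, LocLogHolder c α₀) (hα₁ : ∃ c, LocLogHolder c α₁)
    (hp : ∀ x, 1 / p x = (1 - θ) / p₀ x + θ / p₁ x)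
    (hα : ∀ x, α x = (1 - θ) * α₀ x + θ * α₁ x) :
    ∃ C : ℝ, 0 < C ∧ ∀ lam : ℕ → (Fin n → ℤ) → ℂ,
      seqNorm α p p lam ≠ 0 → seqNorm α p p lam ≠ ∞ →
      ∃ lam0 lam1 : ℕ → (Fin n → ℤ) → ℝ,
        (∀ (j : ℕ) (m : Fin n → ℤ), 0 ≤ lam0 j m) ∧
        (∀ (j : ℕ) (m : Fin n → ℤ), 0 ≤ lam1 j m) ∧
        (∀ (j : ℕ) (m : Fin n → ℤ),
          ENNReal.ofReal ‖lam j m‖ ≤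
            seqNorm α p p lam *
              (ENNReal.ofReal (lam0 j m) ^ (1 - θ) * ENNReal.ofReal (lam1 j m) ^ θ)) ∧
        seqNorm α₀ p₀ p₀ (fun j m => (lam0 j m : ℂ)) ≤ ENNReal.ofReal C ∧
        seqNorm α₁ p₁ p₁ (fun j m => (lam1 j m : ℂ)) ≤ ENNReal.ofReal C := by
  obtain ⟨hθ0, hθ1⟩ := hθ
  obtain ⟨b₀, hb₀⟩ := hp₀b
  obtain ⟨b₁, hb₁⟩ := hp₁b
  set b := max b₀ b₁
  have hb0 : ∀ x, 1 ≤ p₀ x ∧ p₀ x ≤ b := fun x => ⟨(hb₀ x).1, (hb₀ x).2.trans (le_max_left _ _)⟩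
  have hb1 : ∀ x, 1 ≤ p₁ x ∧ p₁ x ≤ b := fun x => ⟨(hb₁ x).1, (hb₁ x).2.trans (le_max_right _ _)⟩
  have hpb : ∀ x, 1 ≤ p x ∧ p x ≤ b := fun x => p_bd hθ0 hθ1 (hb0 x) (hb1 x) (hp x)
  have hb : 1 ≤ b := (hb0 0).1.trans (hb0 0).2
  obtain ⟨B0, hB0, hB0'⟩ := logH hα₀
  obtain ⟨B1, hB1, hB1'⟩ := logH hα₁
  obtain ⟨Bp0, hBp0, hBp0'⟩ := logH' hp₀
  obtain ⟨Bp1, hBp1, hBp1'⟩ := logH' hp₁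
  have hl2 : 0 < Real.log 2 := Real.log_pos (by norm_num)
  set B := B0 + B1
  have hB : 0 ≤ B := by positivity
  have hB' : ∀ (v : ℕ) (x : En n), v * |α x - α (yQ v (mmI v x))| ≤ B := by
    intro v x
    have h0 := hB0' v x
    have h1 := hB1' v x
    set y := yQ v (mmI v x)
    have : |α x - α y| ≤ |α₀ x - α₀ y| + |α₁ x - α₁ y| := by
      have e : α x - α y = (1 - θ) * (α₀ x - α₀ y) + θ * (α₁ x - α₁ y) := by
        rw [hα x, hα y]; ring
      rw [e]
      refine (abs_add_le _ _).trans ?_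
      rw [abs_mul, abs_mul, abs_of_pos hθ0, abs_of_pos (by linarith : 0 < 1 - θ)]
      refine add_le_add ?_ ?_
      · exact mul_le_of_le_one_left (abs_nonneg _) (by linarith)
      · exact mul_le_of_le_one_left (abs_nonneg _) (by linarith)
    calc v * |α x - α y| ≤ v * (|α₀ x - α₀ y| + |α₁ x - α₁ y|) := by gcongr
      _ = v * |α₀ x - α₀ y| + v * |α₁ x - α₁ y| := by ring
      _ ≤ B := add_le_add h0 h1
  set N : ℝ := n + 1 + B
  have hN : 0 ≤ N := by positivity
  set K : ℝ := Real.exp (b * (B * Real.log 2)) + (1 + n : ℝ) ^ ((n : ℝ) + 1)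
  have hK1 : 0 ≤ (1 + n : ℝ) ^ ((n : ℝ) + 1) := by positivity
  have hK2 : 1 ≤ Real.exp (b * (B * Real.log 2)) := Real.one_le_exp (by positivity)
  have hK : 1 ≤ K := by linarith
  have ht0 : 0 ≤ tailI n := ENNReal.toReal_nonneg
  have hC : ∀ B0, 0 < endC n b B0 N Bp0 Bp1 K := by
    intro B0; unfold endC; positivity
  have hC' : ∀ B0, 0 < endC n b B0 N Bp1 Bp0 K := by
    intro B0; unfold endC; positivity
  refine ⟨endC n b B0 N Bp0 Bp1 K + endC n b B1 N Bp1 Bp0 K, add_pos (hC _) (hC' _), ?_⟩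
  intro lam hne hfin
  -- choose an almost optimal constant
  have hlt : seqNorm α p p lam < 2 * seqNorm α p p lam := by
    rw [two_mul]; exact ENNReal.lt_add_right hfin hne
  obtain ⟨c, ⟨hc0, hcI⟩, hc2⟩ := sInf_lt_iff.1 hlt
  have hcfin : c ≠ ∞ := ne_top_of_lt hc2
  set d := c.toReal
  have hd : 0 < d := ENNReal.toReal_pos hc0.ne' hcfin
  have hcd : c = ENNReal.ofReal d := (ENNReal.ofReal_toReal hcfin).symm
  rw [hcd] at hcI
  have hmod : ∀ x, _ := fun x => modular_eq α p lam x (by linarith [(hpb x).1]) d hd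
  simp_rw [hmod] at hcI
  set A : ℕ → En n → ℝ := fun v x =>
    ((2 : ℝ) ^ ((v : ℝ) * (α x + n / 2)) * ‖lam v (mmI v x)‖ / d) ^ p x with hAdef
  have hA : ∀ v x, 0 ≤ A v x := fun v x => by simp only [hAdef]; positivity
  have htb := tbound α p lam (fun x => (hpb x).1) hB hd hB' hcI
  set t : ℕ → (Fin n → ℤ) → ℝ := fun v m =>
    (2 : ℝ) ^ ((v : ℝ) * (α (yQ v m) + n / 2)) * (‖lam v m‖ / d) with htdef
  set ε : ℕ → (Fin n → ℤ) → ℝ := fun v m =>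
    (1 / 2) ^ v * (Real.exp 1 + ‖yQ v m‖) ^ (-((n : ℝ) + 1)) with hεdef
  have hε : ∀ v m, 0 < ε v m := fun v m => by simp only [hεdef]; positivity
  have ht : ∀ v m, 0 ≤ t v m := fun v m => by simp only [htdef]; positivity
  set T : ℕ → (Fin n → ℤ) → ℝ := fun v m => Real.log (max (t v m) (ε v m)) with hTdef
  have hexpT : ∀ v m, Real.exp (T v m) = max (t v m) (ε v m) := fun v m =>
    Real.exp_log (lt_of_lt_of_le (hε v m) (le_max_right _ _))
  have hTN : ∀ v m, |T v m| ≤ N * (v + Real.log (Real.exp 1 + ‖yQ v m‖)) := by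
    intro v m
    refine log_bound hB ?_ (by positivity) (htb v m)
    rw [Real.le_log_iff_exp_le (by positivity)]
    linarith [norm_nonneg (yQ v m)]
  have hT : ∀ v x, Real.exp (T v (mmI v x)) ^ p x ≤
      K * (A v x + (1 / 2) ^ v * (1 + ‖x‖) ^ (-((n : ℝ) + 1))) := by
    intro v x
    rw [hexpT]
    have hp0 : 0 ≤ p x := by linarith [(hpb x).1]
    have h1 : t v (mmI v x) ^ p x ≤ Real.exp (b * (B * Real.log 2)) * A v x := by
      have := core2 (n := n) (a := ‖lam v (mmI v x)‖ / d) (hB' v x) hp0 (hpb x).2 hB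
        (by positivity)
      simp only [hAdef, mul_div_assoc]
      exact this
    have h2 : ε v (mmI v x) ^ p x ≤ _ := tail_bound v x (hpb x).1
    have h3 : max (t v (mmI v x)) (ε v (mmI v x)) ^ p x ≤
        t v (mmI v x) ^ p x + ε v (mmI v x) ^ p x := by
      have h4 : 0 ≤ t v (mmI v x) ^ p x := Real.rpow_nonneg (ht _ _) _
      have h5 : 0 ≤ ε v (mmI v x) ^ p x := Real.rpow_nonneg (hε _ _).le _
      rcases max_cases (t v (mmI v x)) (ε v (mmI v x)) with h | h <;> rw [h.1] <;> linarith
    have h6 : 0 ≤ (1 / 2 : ℝ) ^ v * (1 + ‖x‖) ^ (-((n : ℝ) + 1)) := by positivity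
    have h7 := hA v x
    refine h3.trans ((add_le_add h1 h2).trans ?_)
    simp only [K]
    have h8 := mul_nonneg hK1 h7
    have h9 := mul_nonneg (zero_le_one.trans hK2) h6
    linarith
  refine ⟨facSeq p₀ α₀ p T, facSeq p₁ α₁ p T, fun j m => (facSeq_pos ..).le,
    fun j m => (facSeq_pos ..).le, ?_, ?_, ?_⟩
  · intro j m
    rw [ENNReal.ofReal_rpow_of_nonneg (facSeq_pos ..).le (by linarith),
      ENNReal.ofReal_rpow_of_nonneg (facSeq_pos ..).le hθ0.le,
      ← ENNReal.ofReal_mul (Real.rpow_nonneg (facSeq_pos ..).le _),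
      fac_prod p₀ p₁ p α₀ α₁ α (fun x => by linarith [(hpb x).1]) hp hα,
      ENNReal.ofReal_mul (by norm_num)]
    have h1 : ‖lam j m‖ / d ≤
        Real.exp (T j m) / (2 : ℝ) ^ ((j : ℝ) * (α (yQ j m) + n / 2)) := by
      rw [le_div_iff₀ (by positivity), mul_comm, hexpT]
      exact le_max_left _ _
    calc ENNReal.ofReal ‖lam j m‖ = c * ENNReal.ofReal (‖lam j m‖ / d) := by
          rw [hcd, ← ENNReal.ofReal_mul hd.le, mul_div_cancel₀ _ hd.ne']
      _ ≤ (2 * seqNorm α p p lam) * ENNReal.ofReal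
            (Real.exp (T j m) / (2 : ℝ) ^ ((j : ℝ) * (α (yQ j m) + n / 2))) :=
          mul_le_mul' hc2.le (ENNReal.ofReal_le_ofReal h1)
      _ = _ := by
          rw [ENNReal.ofReal_ofNat]; ring
  · refine (endpoint hθ0 hθ1 p₀ p₁ p α₀ hb0 hb1 hp hB0 hN hBp0 hBp1 hK hB0' hBp0' hBp1' T A hTN
      hA hT hcI).trans (ENNReal.ofReal_le_ofReal ?_)
    linarith [hC' B1]
  · refine (endpoint (θ := 1 - θ) (by linarith) (by linarith) p₁ p₀ p α₁ hb1 hb0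
      (fun x => by rw [hp x]; ring) hB1 hN hBp1 hBp0 hK hB1' hBp1' hBp0' T A hTN
      hA hT hcI).trans (ENNReal.ofReal_le_ofReal ?_)
    linarith [hC B0]
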